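/- arXiv:2003.01533 — 3 statements merged into one kernel-verified Lean document; each statement's English description precedes it below -/
import Mathlib

section
/- Let N, L_B, L_E be positive integers with L_B ≤ N, let A_B ∈ ℂ^{N×L_B} have full column rank, let A_E ∈ ℂ^{N×L_E} be arbitrary, and let SSR > 0 be a real number. Denote by σ_1(A_B) ≤ σ_2(A_B) ≤ … ≤ σ_{L_B}(A_B) the nonzero singular values of A_B arranged in increasing order, and by σ_1(A_E) ≥ σ_2(A_E) ≥ … ≥ σ_N(A_E) the singular values of A_E arranged in decreasing order (padding with zeros so that there are N of them). Then the quantity BMSE_floor := (1/SSR)·trace[A_B (A_Bᴴ A_B)^{−2} A_Bᴴ A_E A_Eᴴ] satisfies (1/SSR)·Σ_{ℓ=1}^{L_B} σ_{N−ℓ+1}(A_E)² / σ_ℓ(A_B)² ≤ BMSE_floor ≤ (1/SSR)·Σ_{ℓ=1}^{L_B} σ_ℓ(A_E)² / σ_ℓ(A_B)². -/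
open Matrix

/-!
Write `A_B = Q C` with `QᴴQ = 1` and `C = Σ Vᴴ`, `V` unitary. Then
`A_B (A_BᴴA_B)⁻² A_Bᴴ = Q Σ⁻² Qᴴ`, and in an eigenbasis of the Hermitian matrix `M = A_E A_Eᴴ`
its trace against `M` becomes `∑ᵢ σᵢ⁻² ∑ⱼ |Wⱼᵢ|² μⱼ`, where `WᴴW = 1`. By Bessel's inequality the
matrix of weights `Pᵢⱼ = |Wⱼᵢ|²` has row sums `1` and column sums at most `1`, so the sum of any `k`
of its rows is a vector of weights in `[0, 1]` with total `k`, whose pairing with `μ` is at most the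
sum of the `k` largest `μⱼ`. Summation by parts against the decreasing sequence `σᵢ⁻²` gives the
upper bound; the lower bound is the upper bound for `-μ` in reverse order.
-/

open Finset (Iic mem_Iic)

section WeightedSums

variable {R : Type*} [CommRing R] [PartialOrder R]

theorem sum_mul_nonneg_of_antitone [IsOrderedRing R] {m : ℕ} {a c : Fin m → R} (ha : Antitone a)
    (ha0 : ∀ i, 0 ≤ a i) (hc : ∀ k, 0 ≤ ∑ i ∈ Iic k, c i) : 0 ≤ ∑ i, a i * c i := by
  induction m with
  | zero => simp
  | succ m ih =>
    have init_nonneg : 0 ≤ ∑ i : Fin m, (a i.castSucc - a (Fin.last m)) * c i.castSucc :=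
      ih (fun i j hij => sub_le_sub_right (ha (Fin.castSucc_le_castSucc_iff.2 hij)) _)
        (fun i => sub_nonneg.2 (ha (Fin.le_last _)))
        (fun k => by simpa only [Fin.sum_Iic_castSucc] using hc k.castSucc)
    have total_nonneg : 0 ≤ ∑ i, c i := by
      simpa only [← Fin.top_eq_last, Finset.Iic_top] using hc (Fin.last m)
    calc 0 ≤ ∑ i : Fin m, (a i.castSucc - a (Fin.last m)) * c i.castSucc
          + a (Fin.last m) * ∑ i, c i := add_nonneg init_nonneg (mul_nonneg (ha0 _) total_nonneg)
      _ = ∑ i, a i * c i := by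
        simp only [Fin.sum_univ_castSucc, sub_mul, Finset.sum_sub_distrib, mul_add, Finset.mul_sum]
        ring

theorem sum_mul_le_sum_of_threshold [IsOrderedRing R] {ι : Type*} [Fintype ι] {s : Finset ι}
    {w b : ι → R} {t : R} (hw0 : ∀ j, 0 ≤ w j) (hw1 : ∀ j, w j ≤ 1) (hw : ∑ j, w j = s.card)
    (hs : ∀ j ∈ s, t ≤ b j) (hsc : ∀ j ∉ s, b j ≤ t) : ∑ j, w j * b j ≤ ∑ j ∈ s, b j := by
  classical
  -- `w` and the indicator of `s` have the same total, so `b` may be shifted by `t`; after the shift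
  -- every term of the difference is nonnegative.
  have excess_nonneg : 0 ≤ ∑ j, ((if j ∈ s then 1 else 0) - w j) * (b j - t) := by
    refine Finset.sum_nonneg fun j _ => ?_
    split_ifs with hj
    · exact mul_nonneg (sub_nonneg.2 (hw1 j)) (sub_nonneg.2 (hs j hj))
    · exact mul_nonneg_of_nonpos_of_nonpos (by simpa using hw0 j) (sub_nonpos.2 (hsc j hj))
  have excess_eq : ∑ j, ((if j ∈ s then 1 else 0) - w j) * (b j - t)
      = ∑ j ∈ s, b j - ∑ j, w j * b j := by
    simp only [sub_mul, mul_sub, Finset.sum_sub_distrib, ← Finset.sum_mul, hw]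
    simp
  exact sub_nonneg.1 (excess_eq ▸ excess_nonneg)

/-- A rectangular analogue of a doubly stochastic matrix: nonnegative entries, row sums `1`, and
column sums at most `1` (they cannot all be `1` when there are more columns than rows). The squared
moduli of the entries of a matrix with orthonormal rows have these properties. -/
structure IsSemistochastic {m n : Type*} [Fintype m] [Fintype n] (P : Matrix m n R) : Prop where
  nonneg (i : m) (j : n) : 0 ≤ P i j
  row_sum (i : m) : ∑ j, P i j = 1
  col_sum_le (j : n) : ∑ i, P i j ≤ 1

namespace IsSemistochastic

theorem submatrix_equiv {m n k l : Type*} [Fintype m] [Fintype n] [Fintype k] [Fintype l]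
    {P : Matrix m n R} (hP : IsSemistochastic P) (e : k ≃ m) (f : l ≃ n) :
    IsSemistochastic (P.submatrix e f) where
  nonneg _ _ := hP.nonneg _ _
  row_sum i := (f.sum_comp (P (e i))).trans (hP.row_sum _)
  col_sum_le j := (e.sum_comp (P · (f j))).trans_le (hP.col_sum_le _)

variable [IsOrderedRing R] {m n : ℕ} {P : Matrix (Fin m) (Fin n) R} {a : Fin m → R} {b : Fin n → R}

theorem sum_Iic_mulVec_le (hP : IsSemistochastic P) (h : m ≤ n) (hb : Antitone b) (k : Fin m) :
    ∑ i ∈ Iic k, (P *ᵥ b) i ≤ ∑ i ∈ Iic k, b (Fin.castLE h i) := by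
  calc ∑ i ∈ Iic k, (P *ᵥ b) i = ∑ j, (∑ i ∈ Iic k, P i j) * b j := by
        simp only [mulVec, dotProduct, Finset.sum_mul]
        exact Finset.sum_comm
    _ ≤ ∑ j ∈ Iic (Fin.castLE h k), b j := by
        refine sum_mul_le_sum_of_threshold (t := b (Fin.castLE h k))
          (fun j => Finset.sum_nonneg fun i _ => hP.nonneg i j) (fun j => ?_) ?_
          (fun j hj => hb (mem_Iic.1 hj)) (fun j hj => hb (not_le.1 (mt mem_Iic.2 hj)).le)
        · exact (Finset.sum_le_sum_of_subset_of_nonneg (Finset.subset_univ _)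
            fun i _ _ => hP.nonneg i j).trans (hP.col_sum_le j)
        · rw [Finset.sum_comm]
          simp [hP.row_sum]
    _ = ∑ i ∈ Iic k, b (Fin.castLE h i) := by
        simp [← Fin.map_castLEEmb_Iic]

theorem dotProduct_mulVec_le (hP : IsSemistochastic P) (h : m ≤ n) (ha : Antitone a)
    (ha0 : ∀ i, 0 ≤ a i) (hb : Antitone b) : a ⬝ᵥ P *ᵥ b ≤ ∑ i, a i * b (Fin.castLE h i) := by
  have gap_nonneg : 0 ≤ ∑ i, a i * (b (Fin.castLE h i) - (P *ᵥ b) i) :=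
    sum_mul_nonneg_of_antitone ha ha0 fun k => by
      simpa only [Finset.sum_sub_distrib, sub_nonneg] using hP.sum_Iic_mulVec_le h hb k
  simpa only [dotProduct, mul_sub, Finset.sum_sub_distrib, sub_nonneg] using gap_nonneg

theorem le_dotProduct_mulVec (hP : IsSemistochastic P) (h : m ≤ n) (ha : Antitone a)
    (ha0 : ∀ i, 0 ≤ a i) (hb : Antitone b) :
    ∑ i, a i * b (Fin.rev (Fin.castLE h i)) ≤ a ⬝ᵥ P *ᵥ b := by
  have neg_rev_antitone : Antitone fun j => -b (Fin.rev j) :=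
    fun i j hij => neg_le_neg (hb (Fin.rev_le_rev.2 hij))
  have mulVec_neg_rev :
      P.submatrix (Equiv.refl _) Fin.revPerm *ᵥ (fun j => -b (Fin.rev j)) = -(P *ᵥ b) := by
    ext i
    simpa [mulVec, dotProduct] using Equiv.sum_comp Fin.revPerm fun j => P i j * b j
  have neg_bound := (hP.submatrix_equiv (Equiv.refl _) Fin.revPerm).dotProduct_mulVec_le h ha ha0
    neg_rev_antitone
  simpa only [mulVec_neg_rev, dotProduct_neg, mul_neg, Finset.sum_neg_distrib, neg_le_neg_iff]
    using neg_bound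

end IsSemistochastic

end WeightedSums

section StarAlgebra

variable {α k l m n : Type*} [Fintype m] [Fintype n] [DecidableEq m]

theorem mul_conjTranspose_mul_mul_of_isometry [Semiring α] [Star α] {Q : Matrix n m α}
    (hQ : Qᴴ * Q = 1) (A : Matrix k m α) (B : Matrix m l α) : A * Qᴴ * (Q * B) = A * B := by
  rw [Matrix.mul_assoc, ← Matrix.mul_assoc Qᴴ, hQ, Matrix.one_mul]

variable [CommRing α] [StarRing α] {B : Matrix n m α} {C : Matrix m m α}

theorem isometry_mul_inv_of_gram_eq (hC : IsUnit C.det) (h : Bᴴ * B = Cᴴ * C) :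
    (B * C⁻¹)ᴴ * (B * C⁻¹) = 1 := by
  calc (B * C⁻¹)ᴴ * (B * C⁻¹) = (C⁻¹)ᴴ * (Bᴴ * B) * C⁻¹ := by
        simp only [conjTranspose_mul, Matrix.mul_assoc]
    _ = (C * C⁻¹)ᴴ * (C * C⁻¹) := by
        rw [h]
        simp only [conjTranspose_mul, Matrix.mul_assoc]
    _ = 1 := by rw [mul_nonsing_inv C hC, conjTranspose_one, Matrix.one_mul]

theorem mul_inv_gram_sq_mul_conjTranspose_eq (h : Bᴴ * B = Cᴴ * C) :
    B * ((Bᴴ * B) ^ 2)⁻¹ * Bᴴ = B * C⁻¹ * (C * Cᴴ)⁻¹ * (B * C⁻¹)ᴴ := by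
  rw [h, pow_two]
  simp only [Matrix.mul_inv_rev, conjTranspose_mul, conjTranspose_nonsing_inv, Matrix.mul_assoc]

end StarAlgebra

section Isometries

variable {𝕜 : Type*} [RCLike 𝕜] {m n : Type*} [Fintype m] [Fintype n] [DecidableEq m]

theorem isSemistochastic_norm_sq_of_isometry {Q : Matrix n m 𝕜} (hQ : Qᴴ * Q = 1) :
    IsSemistochastic (Matrix.of fun i j => ‖Q j i‖ ^ 2) where
  nonneg _ _ := sq_nonneg _
  row_sum i := by
    have gram_diag : (Qᴴ * Q) i i = 1 := by rw [hQ, one_apply_eq]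
    simp only [mul_apply, conjTranspose_apply, RCLike.star_def, RCLike.conj_mul] at gram_diag
    exact_mod_cast gram_diag
  col_sum_le j := by
    classical
    have isProj : (1 - Q * Qᴴ)ᴴ * (1 - Q * Qᴴ) = 1 - Q * Qᴴ := by
      have := mul_conjTranspose_mul_mul_of_isometry hQ Q Qᴴ
      simp [Matrix.sub_mul, Matrix.mul_sub, this]
    have diag_nonneg : 0 ≤ RCLike.re ((1 - Q * Qᴴ : Matrix n n 𝕜) j j) := by
      rw [← isProj, mul_apply, map_sum]
      refine Finset.sum_nonneg fun i _ => ?_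
      rw [conjTranspose_apply, RCLike.star_def, RCLike.conj_mul]
      exact_mod_cast sq_nonneg ‖(1 - Q * Qᴴ : Matrix n n 𝕜) i j‖
    have proj_diag : (Q * Qᴴ) j j = ((∑ i, ‖Q j i‖ ^ 2 : ℝ) : 𝕜) := by
      simp [mul_apply, RCLike.mul_conj]
    simpa [proj_diag] using diag_nonneg

theorem re_trace_mul_diagonal_mul_conjTranspose_mul_diagonal [DecidableEq n] (Q : Matrix n m 𝕜)
    (a : m → ℝ) (b : n → ℝ) :
    RCLike.re (trace (Q * diagonal (fun i => (a i : 𝕜)) * Qᴴ * diagonal (fun j => (b j : 𝕜)))) =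
      a ⬝ᵥ (Matrix.of fun i j => ‖Q j i‖ ^ 2) *ᵥ b := by
  have entry (i : m) (j : n) :
      Q j i * (a i : 𝕜) * star (Q j i) * (b j : 𝕜) = ((a i * (‖Q j i‖ ^ 2 * b j) : ℝ) : 𝕜) := by
    rw [mul_right_comm (Q j i), RCLike.star_def, RCLike.mul_conj]
    push_cast
    ring
  simp only [trace, diag_apply, mul_diagonal, mul_apply (N := Qᴴ), conjTranspose_apply,
    Finset.sum_mul, entry, map_sum, RCLike.ofReal_re, dotProduct, mulVec, Finset.mul_sum, of_apply]
  exact Finset.sum_comm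

end Isometries

section Hermitian

variable {𝕜 : Type*} [RCLike 𝕜] {k m n : Type*} [Fintype k] [Fintype m] [Fintype n] [DecidableEq m]

theorem exists_unitary_eq_mul_diagonal_mul_conjTranspose [DecidableEq k] [DecidableEq n]
    {A : Matrix n n 𝕜} (hA : A.IsHermitian) {d : k → ℝ} (e : k ≃ n)
    (hd : ∀ i, d i = hA.eigenvalues (e i)) :
    ∃ U : Matrix n k 𝕜, Uᴴ * U = 1 ∧ U * Uᴴ = 1 ∧
      A = U * diagonal (fun i => (d i : 𝕜)) * Uᴴ := by
  set U : Matrix n n 𝕜 := hA.eigenvectorUnitary.1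
  have hUU : Uᴴ * U = 1 := Unitary.coe_star_mul_self hA.eigenvectorUnitary
  have hUU' : U * Uᴴ = 1 := Unitary.coe_mul_star_self hA.eigenvectorUnitary
  have spectral : A = U * diagonal (RCLike.ofReal ∘ hA.eigenvalues) * Uᴴ := hA.spectral_theorem
  have diagonal_eq : diagonal (fun i => (d i : 𝕜)) =
      (diagonal (RCLike.ofReal ∘ hA.eigenvalues)).submatrix e e := by
    simp only [submatrix_diagonal_equiv, Function.comp_def, hd]
  refine ⟨U.submatrix id e, ?_, ?_, ?_⟩
  · rw [conjTranspose_submatrix, ← submatrix_mul _ _ _ _ _ Function.bijective_id, hUU,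
      submatrix_one_equiv]
  · rw [conjTranspose_submatrix, submatrix_mul_equiv, hUU', submatrix_id_id]
  · rw [diagonal_eq, conjTranspose_submatrix, submatrix_mul_equiv, submatrix_mul_equiv, ← spectral,
      submatrix_id_id]

theorem exists_isSemistochastic_re_trace_eq [DecidableEq n] {Q : Matrix n m 𝕜}
    (hQ : Qᴴ * Q = 1) {M : Matrix n n 𝕜} (hM : M.IsHermitian) {b : k → ℝ} (e : k ≃ n)
    (hb : ∀ j, b j = hM.eigenvalues (e j)) :
    ∃ P : Matrix m k ℝ, IsSemistochastic P ∧ ∀ a : m → ℝ,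
      RCLike.re (trace (Q * diagonal (fun i => (a i : 𝕜)) * Qᴴ * M)) = a ⬝ᵥ P *ᵥ b := by
  classical
  obtain ⟨U, -, hUU', hMU⟩ := exists_unitary_eq_mul_diagonal_mul_conjTranspose hM e hb
  have isometry : (Uᴴ * Q)ᴴ * (Uᴴ * Q) = 1 := by
    rw [conjTranspose_mul, conjTranspose_conjTranspose, Matrix.mul_assoc, ← Matrix.mul_assoc U,
      hUU', Matrix.one_mul, hQ]
  refine ⟨_, isSemistochastic_norm_sq_of_isometry isometry, fun a => ?_⟩
  rw [← re_trace_mul_diagonal_mul_conjTranspose_mul_diagonal, conjTranspose_mul,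
    conjTranspose_conjTranspose]
  conv_lhs => rw [hMU, ← Matrix.mul_assoc, trace_mul_comm]
  simp only [Matrix.mul_assoc]

theorem eigenvalues_gram_ne_zero_of_rank_eq_card {B : Matrix n m 𝕜}
    (hB : B.rank = Fintype.card m) (hG : (Bᴴ * B).IsHermitian) (i : m) : hG.eigenvalues i ≠ 0 := by
  classical
  have card_eq : Fintype.card {j // hG.eigenvalues j ≠ 0} = Fintype.card m := by
    open scoped ComplexOrder in
    rw [← hG.rank_eq_card_non_zero_eigs, rank_conjTranspose_mul_self, hB]
  by_contra h
  exact (Fintype.card_subtype_lt (p := fun j => hG.eigenvalues j ≠ 0) (not_not.2 h)).ne card_eq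

theorem exists_isometry_mul_inv_gram_sq_eq {B : Matrix n m 𝕜} (hG : (Bᴴ * B).IsHermitian)
    {σ : m → ℝ} (hσ0 : ∀ i, σ i ≠ 0) (e : m ≃ m) (hσ : ∀ i, σ i ^ 2 = hG.eigenvalues (e i)) :
    ∃ Q : Matrix n m 𝕜, Qᴴ * Q = 1 ∧
      B * ((Bᴴ * B) ^ 2)⁻¹ * Bᴴ = Q * diagonal (fun i => (((σ i ^ 2)⁻¹ : ℝ) : 𝕜)) * Qᴴ := by
  obtain ⟨V, hVV, -, gram_eq⟩ := exists_unitary_eq_mul_diagonal_mul_conjTranspose hG e hσ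
  have hσ0' (i : m) : (σ i : 𝕜) ≠ 0 := RCLike.ofReal_ne_zero.2 (hσ0 i)
  set S : Matrix m m 𝕜 := diagonal fun i => (σ i : 𝕜) with hS
  have hSH : Sᴴ = S := by simp [hS, diagonal_conjTranspose, Pi.star_def]
  have hSS : S * S = diagonal fun i => ((σ i ^ 2 : ℝ) : 𝕜) := by
    simp [hS, diagonal_mul_diagonal, pow_two]
  have C_gram : Bᴴ * B = (S * Vᴴ)ᴴ * (S * Vᴴ) := by
    rw [gram_eq, ← hSS, conjTranspose_mul, conjTranspose_conjTranspose, hSH]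
    simp only [Matrix.mul_assoc]
  have C_cogram : S * Vᴴ * (S * Vᴴ)ᴴ = S * S := by
    rw [conjTranspose_mul, conjTranspose_conjTranspose, hSH,
      mul_conjTranspose_mul_mul_of_isometry hVV]
  have cogram_inv : (S * S)⁻¹ = diagonal fun i => (((σ i ^ 2)⁻¹ : ℝ) : 𝕜) := by
    apply inv_eq_left_inv
    simp [hSS, diagonal_mul_diagonal, hσ0']
  have C_isUnit : IsUnit (S * Vᴴ).det := by
    apply isUnit_det_of_right_inverse (B := V * diagonal fun i => (σ i : 𝕜)⁻¹)
    rw [mul_conjTranspose_mul_mul_of_isometry hVV]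
    simp [hS, diagonal_mul_diagonal, hσ0']
  refine ⟨B * (S * Vᴴ)⁻¹, isometry_mul_inv_of_gram_eq C_isUnit C_gram, ?_⟩
  rw [mul_inv_gram_sq_mul_conjTranspose_eq C_gram, C_cogram, cogram_inv]

end Hermitian

theorem lse_bmse_floor_bounds_general {𝕜 ι : Type*} [RCLike 𝕜] [Fintype ι] [DecidableEq ι]
    {N LB : ℕ} (hle : LB ≤ N) {AB : Matrix ι (Fin LB) 𝕜} (hrank : AB.rank = LB) {M : Matrix ι ι 𝕜}
    {SSR : ℝ} (hSSR : 0 < SSR) (hermB : (ABᴴ * AB).IsHermitian) (hermM : M.IsHermitian)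
    {sB : Fin LB → ℝ} {μ : Fin N → ℝ} (hsBnn : ∀ i, 0 ≤ sB i) (hsBmono : Monotone sB)
    (hμ : Antitone μ) (eB : Fin LB ≃ Fin LB) (heB : ∀ i, sB i ^ 2 = hermB.eigenvalues (eB i))
    (eM : Fin N ≃ ι) (heM : ∀ i, μ i = hermM.eigenvalues (eM i)) :
    (1 / SSR) * ∑ i : Fin LB, μ (Fin.rev (Fin.castLE hle i)) / sB i ^ 2 ≤
        (1 / SSR) * RCLike.re (trace (AB * ((ABᴴ * AB) ^ 2)⁻¹ * ABᴴ * M)) ∧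
      (1 / SSR) * RCLike.re (trace (AB * ((ABᴴ * AB) ^ 2)⁻¹ * ABᴴ * M)) ≤
        (1 / SSR) * ∑ i : Fin LB, μ (Fin.castLE hle i) / sB i ^ 2 := by
  have sB_ne_zero (i : Fin LB) : sB i ≠ 0 := by
    have := eigenvalues_gram_ne_zero_of_rank_eq_card (by simpa using hrank) hermB (eB i)
    rwa [← heB, pow_ne_zero_iff two_ne_zero] at this
  have sB_pos (i : Fin LB) : 0 < sB i := (hsBnn i).lt_of_ne' (sB_ne_zero i)
  obtain ⟨Q, hQ, pinv_eq⟩ := exists_isometry_mul_inv_gram_sq_eq hermB sB_ne_zero eB heB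
  obtain ⟨P, hP, trace_eq⟩ := exists_isSemistochastic_re_trace_eq hQ hermM eM heM
  have weights_antitone : Antitone fun i => (sB i ^ 2)⁻¹ := fun i j hij =>
    inv_anti₀ (pow_pos (sB_pos i) 2) (pow_le_pow_left₀ (hsBnn i) (hsBmono hij) 2)
  have weights_nonneg (i : Fin LB) : 0 ≤ (sB i ^ 2)⁻¹ := inv_nonneg.2 (sq_nonneg _)
  have inv_SSR_nonneg : 0 ≤ SSR⁻¹ := inv_nonneg.2 hSSR.le
  simp only [pinv_eq, trace_eq, div_eq_inv_mul, mul_one]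
  exact ⟨mul_le_mul_of_nonneg_left (hP.le_dotProduct_mulVec hle weights_antitone weights_nonneg hμ)
      inv_SSR_nonneg,
    mul_le_mul_of_nonneg_left (hP.dotProduct_mulVec_le hle weights_antitone weights_nonneg hμ)
      inv_SSR_nonneg⟩

/-- **Lemma 1: bounds on the high-SNR BMSE floor of the least squares estimator.**
Let `A_B ∈ ℂ^{N×L_B}` (with `0 < L_B ≤ N`) have full column rank, let
`A_E ∈ ℂ^{N×L_E}` be arbitrary, and let `SSR > 0`.  Let `sB : Fin L_B → ℝ` be the
nonzero singular values of `A_B` arranged in increasing order (i.e. a monotone,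
nonnegative enumeration whose squares are, up to a permutation, the eigenvalues of
the Hermitian matrix `A_Bᴴ A_B`), and let `sE : Fin N → ℝ` be the singular values
of `A_E` arranged in decreasing order, padded with zeros so that there are `N` of
them (an antitone, nonnegative enumeration whose squares are, up to a permutation,
the eigenvalues of `A_E A_Eᴴ`).  Then the floor
`BMSE_floor = (1/SSR)·trace[A_B (A_Bᴴ A_B)⁻² A_Bᴴ A_E A_Eᴴ]` satisfies
`(1/SSR)·Σ_{ℓ=1}^{L_B} σ_{N−ℓ+1}(A_E)²/σ_ℓ(A_B)² ≤ BMSE_floor ≤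
 (1/SSR)·Σ_{ℓ=1}^{L_B} σ_ℓ(A_E)²/σ_ℓ(A_B)²`. -/
theorem lse_bmse_floor_bounds
    (N LB LE : ℕ) (hN : 0 < N) (hLB : 0 < LB) (hLE : 0 < LE) (hle : LB ≤ N)
    (AB : Matrix (Fin N) (Fin LB) ℂ) (hrank : AB.rank = LB)
    (AE : Matrix (Fin N) (Fin LE) ℂ)
    (SSR : ℝ) (hSSR : 0 < SSR)
    (hermB : (ABᴴ * AB).IsHermitian) (hermE : (AE * AEᴴ).IsHermitian)
    (sB : Fin LB → ℝ) (sE : Fin N → ℝ)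
    (hsBnn : ∀ i, 0 ≤ sB i) (hsEnn : ∀ i, 0 ≤ sE i)
    (hsBmono : Monotone sB) (hsEanti : Antitone sE)
    (eB : Fin LB ≃ Fin LB) (heB : ∀ i, sB i ^ 2 = hermB.eigenvalues (eB i))
    (eE : Fin N ≃ Fin N) (heE : ∀ i, sE i ^ 2 = hermE.eigenvalues (eE i)) :
    (1 / SSR) * ∑ i : Fin LB, sE (Fin.rev (Fin.castLE hle i)) ^ 2 / sB i ^ 2 ≤
        (1 / SSR) *
          (Matrix.trace (AB * ((ABᴴ * AB) ^ 2)⁻¹ * ABᴴ * (AE * AEᴴ))).re ∧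
      (1 / SSR) *
          (Matrix.trace (AB * ((ABᴴ * AB) ^ 2)⁻¹ * ABᴴ * (AE * AEᴴ))).re ≤
        (1 / SSR) * ∑ i : Fin LB, sE (Fin.castLE hle i) ^ 2 / sB i ^ 2 :=
  lse_bmse_floor_bounds_general hle hrank hSSR hermB hermE hsBnn hsBmono
    (fun _ j hij => pow_le_pow_left₀ (hsEnn j) (hsEanti hij) 2) eB heB eE heE
end

section
/- Let K_B ∈ ℂ^{N×L_B} and K_E ∈ ℂ^{N×L_E} both have full column rank, and suppose their column spaces are disjoint, i.e., range(K_B) ∩ range(K_E) = {0}. For every σ² > 0 the matrix K_Bᴴ (K_E K_Eᴴ + σ² I_N)^{−1} K_B is invertible, and lim_{σ²→0⁺} trace[ (K_Bᴴ (K_E K_Eᴴ + σ² I_N)^{−1} K_B)^{−1} ] = 0. -/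
open Matrix Filter Topology

/-!
Since the two ranges are disjoint, some `W` satisfies `W * KB = 1` and `W * KE = 0`, so the linear
unbiased estimator `W` removes the spoofing signal and has error covariance `σ² W Wᴴ`. By the
Gauss–Markov theorem the error covariance of the maximum likelihood estimator is at most that of
`W` in the Loewner order. Taking traces, the mean squared error is at most `σ² tr (W Wᴴ)`.
-/

open scoped ComplexOrder

section Field

variable {F n b e : Type*} [Field F] [Fintype b]

theorem mulVec_injective_of_rank_eq_card [Finite n] {A : Matrix n b F}
    (hA : A.rank = Fintype.card b) : Function.Injective A.mulVec := by
  rw [mulVec_injective_iff, linearIndependent_iff_card_eq_finrank_span, ← hA]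
  exact A.rank_eq_finrank_span_cols

theorem exists_mul_eq_one_and_mul_eq_zero [Fintype n] [DecidableEq b] [Fintype e]
    {A : Matrix n b F} {B : Matrix n e F} (hA : Function.Injective A.mulVec)
    (hAB : Disjoint (LinearMap.range A.mulVecLin) (LinearMap.range B.mulVecLin)) :
    ∃ W : Matrix b n F, W * A = 1 ∧ W * B = 0 := by
  classical
  let q := (LinearMap.range B.mulVecLin).mkQ
  have hker : LinearMap.ker (q ∘ₗ A.mulVecLin) = ⊥ := by
    refine LinearMap.ker_eq_bot'.mpr fun x hx => hA ?_
    have hAx : A *ᵥ x ∈ LinearMap.range B.mulVecLin := (Submodule.Quotient.mk_eq_zero _).mp hx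
    rw [mulVec_zero]
    exact Submodule.disjoint_def.mp hAB _ ⟨x, rfl⟩ hAx
  obtain ⟨g, hg⟩ := LinearMap.exists_leftInverse_of_injective _ hker
  have hqB : q ∘ₗ B.mulVecLin = 0 := LinearMap.range_mkQ_comp _
  refine ⟨LinearMap.toMatrix' (g ∘ₗ q), toLin'.injective ?_, toLin'.injective ?_⟩
  · rw [toLin'_mul, toLin'_toMatrix', toLin'_one]
    exact hg
  · rw [toLin'_mul, toLin'_toMatrix', map_zero, LinearMap.comp_assoc, toLin'_apply', hqB,
      LinearMap.comp_zero]

end Field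

section Estimator

variable {R n b e : Type*} [CommRing R] [StarRing R] [Fintype n] [DecidableEq n]

theorem mul_mul_conjTranspose_add_smul_one_mul [Fintype e] {B : Matrix n e R} {W : Matrix b n R}
    (hW : W * B = 0) (c : R) :
    W * (B * Bᴴ + c • (1 : Matrix n n R)) * Wᴴ = c • (W * Wᴴ) := by
  rw [Matrix.mul_add, ← Matrix.mul_assoc, hW, Matrix.zero_mul, zero_add, Matrix.mul_smul,
    Matrix.mul_one, Matrix.smul_mul]

variable [Fintype b] [DecidableEq b]

/-- The maximum likelihood estimator of `h`, as a matrix acting on the observation `y = K h + d`,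
where `d` is Gaussian noise with covariance `C`. The inverses are meaningful only when `C` and
`Kᴴ * C⁻¹ * K` are invertible. -/
noncomputable def mleEstimator (K : Matrix n b R) (C : Matrix n n R) : Matrix b n R :=
  (Kᴴ * C⁻¹ * K)⁻¹ * Kᴴ * C⁻¹

theorem mleEstimator_mul_self {K : Matrix n b R} {C : Matrix n n R}
    (h : IsUnit (Kᴴ * C⁻¹ * K)) : mleEstimator K C * K = 1 := by
  rw [mleEstimator, Matrix.mul_assoc, Matrix.mul_assoc, ← Matrix.mul_assoc Kᴴ,
    nonsing_inv_mul _ ((isUnit_iff_isUnit_det _).mp h)]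

theorem mleEstimator_mul_mul_conjTranspose {K : Matrix n b R} {C : Matrix n n R}
    {W : Matrix b n R} (hC : IsUnit C) (hW : W * K = 1) :
    mleEstimator K C * C * Wᴴ = (Kᴴ * C⁻¹ * K)⁻¹ := by
  rw [mleEstimator, nonsing_inv_mul_cancel_right _ _ ((isUnit_iff_isUnit_det _).mp hC),
    Matrix.mul_assoc, ← conjTranspose_mul, hW, conjTranspose_one, Matrix.mul_one]

end Estimator

section RCLike

variable {𝕜 n b e : Type*} [RCLike 𝕜]

theorem norm_le_norm_of_nonneg_of_le_rclike {x y : 𝕜} (hx : 0 ≤ x) (hxy : x ≤ y) :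
    ‖x‖ ≤ ‖y‖ := by
  rwa [← RCLike.ofReal_le_ofReal (K := 𝕜), RCLike.norm_of_nonneg' hx,
    RCLike.norm_of_nonneg' (hx.trans hxy)]

theorem posDef_mul_conjTranspose_add_smul_one [Finite n] [DecidableEq n] [Fintype e]
    (B : Matrix n e 𝕜) {s : ℝ} (hs : 0 < s) :
    (B * Bᴴ + (s : 𝕜) • (1 : Matrix n n 𝕜)).PosDef :=
  .posSemidef_add (posSemidef_self_mul_conjTranspose B)
    (PosDef.one.smul (RCLike.ofReal_pos.mpr hs))

variable [Fintype n] [DecidableEq n] [Fintype b] [DecidableEq b]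

theorem gauss_markov {K : Matrix n b 𝕜} {C : Matrix n n 𝕜} {W : Matrix b n 𝕜} (hC : C.PosDef)
    (hW : W * K = 1) : (W * C * Wᴴ - (Kᴴ * C⁻¹ * K)⁻¹).PosSemidef := by
  have hK : Function.Injective K.mulVec :=
    Function.LeftInverse.injective (g := W.mulVec) fun x => by rw [mulVec_mulVec, hW, one_mulVec]
  have hM : (Kᴴ * C⁻¹ * K).PosDef := hC.inv.conjTranspose_mul_mul_same hK
  set V := mleEstimator K C
  have hVV : V * C * Vᴴ = (Kᴴ * C⁻¹ * K)⁻¹ :=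
    mleEstimator_mul_mul_conjTranspose hC.isUnit (mleEstimator_mul_self hM.isUnit)
  have hVW : V * C * Wᴴ = (Kᴴ * C⁻¹ * K)⁻¹ := mleEstimator_mul_mul_conjTranspose hC.isUnit hW
  have hWV : W * C * Vᴴ = (Kᴴ * C⁻¹ * K)⁻¹ := by
    rw [← hM.inv.isHermitian.eq, ← hVW]
    simp only [conjTranspose_mul, conjTranspose_conjTranspose, hC.isHermitian.eq, Matrix.mul_assoc]
  have hdiff : (W - V) * C * (W - V)ᴴ = W * C * Wᴴ - (Kᴴ * C⁻¹ * K)⁻¹ := by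
    rw [conjTranspose_sub, Matrix.sub_mul, Matrix.sub_mul, Matrix.mul_sub, Matrix.mul_sub, hWV,
      hVW, hVV, sub_self, sub_zero]
  exact hdiff ▸ hC.posSemidef.mul_mul_conjTranspose_same (W - V)

theorem trace_inv_le_of_mul_eq_one_of_mul_eq_zero [Fintype e] {A : Matrix n b 𝕜}
    {B : Matrix n e 𝕜} {W : Matrix b n 𝕜} (hWA : W * A = 1) (hWB : W * B = 0) {s : ℝ}
    (hs : 0 < s) :
    (Aᴴ * (B * Bᴴ + (s : 𝕜) • (1 : Matrix n n 𝕜))⁻¹ * A)⁻¹.trace ≤ s * (W * Wᴴ).trace := by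
  have h := (gauss_markov (posDef_mul_conjTranspose_add_smul_one B hs) hWA).trace_nonneg
  rwa [trace_sub, sub_nonneg, mul_mul_conjTranspose_add_smul_one_mul hWB, trace_smul,
    smul_eq_mul] at h

theorem mle_perfect_spoofing_cancellation_general [Fintype e] (A : Matrix n b 𝕜)
    (B : Matrix n e 𝕜) (hA : A.rank = Fintype.card b)
    (hAB : Disjoint (LinearMap.range A.mulVecLin) (LinearMap.range B.mulVecLin)) :
    (∀ s : ℝ, 0 < s → IsUnit (Aᴴ * (B * Bᴴ + (s : 𝕜) • (1 : Matrix n n 𝕜))⁻¹ * A)) ∧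
    Tendsto (fun s : ℝ => (Aᴴ * (B * Bᴴ + (s : 𝕜) • (1 : Matrix n n 𝕜))⁻¹ * A)⁻¹.trace)
      (𝓝[>] 0) (𝓝 0) := by
  have hinj := mulVec_injective_of_rank_eq_card hA
  have hM (s : ℝ) (hs : 0 < s) : (Aᴴ * (B * Bᴴ + (s : 𝕜) • (1 : Matrix n n 𝕜))⁻¹ * A).PosDef :=
    (posDef_mul_conjTranspose_add_smul_one B hs).inv.conjTranspose_mul_mul_same hinj
  refine ⟨fun s hs => (hM s hs).isUnit, ?_⟩
  obtain ⟨W, hWA, hWB⟩ := exists_mul_eq_one_and_mul_eq_zero hinj hAB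
  have hbound : Tendsto (fun s : ℝ => ‖(s : 𝕜) * (W * Wᴴ).trace‖) (𝓝[>] 0) (𝓝 0) := by
    have hcont : Continuous fun s : ℝ => ‖(s : 𝕜) * (W * Wᴴ).trace‖ := by fun_prop
    exact (hcont.tendsto' 0 0 (by simp)).mono_left nhdsWithin_le_nhds
  refine squeeze_zero_norm' ?_ hbound
  filter_upwards [self_mem_nhdsWithin] with s hs
  exact norm_le_norm_of_nonneg_of_le_rclike (hM s hs).inv.posSemidef.trace_nonneg
    (trace_inv_le_of_mul_eq_one_of_mul_eq_zero hWA hWB hs)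

end RCLike

/-- **Perfect spoofing cancellation for the MLE (Lemma 2).**
Let `K_B ∈ ℂ^{N×L_B}` and `K_E ∈ ℂ^{N×L_E}` both have full column rank with
disjoint column spaces, i.e. `range(K_B) ∩ range(K_E) = {0}`.  Then for every
`σ² > 0` the matrix `K_Bᴴ (K_E K_Eᴴ + σ² I_N)⁻¹ K_B` is invertible, and
`trace[(K_Bᴴ (K_E K_Eᴴ + σ² I_N)⁻¹ K_B)⁻¹] → 0` as `σ² → 0⁺`. -/
theorem mle_perfect_spoofing_cancellation
    (N LB LE : ℕ) (KB : Matrix (Fin N) (Fin LB) ℂ) (KE : Matrix (Fin N) (Fin LE) ℂ)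
    (hrankB : KB.rank = LB) (hrankE : KE.rank = LE)
    (hdisj : LinearMap.range KB.mulVecLin ⊓ LinearMap.range KE.mulVecLin = ⊥) :
    (∀ σ2 : ℝ, 0 < σ2 →
      IsUnit (KBᴴ * (KE * KEᴴ + (σ2 : ℂ) • (1 : Matrix (Fin N) (Fin N) ℂ))⁻¹ * KB)) ∧
    Tendsto
      (fun σ2 : ℝ =>
        Matrix.trace
          ((KBᴴ * (KE * KEᴴ + (σ2 : ℂ) • (1 : Matrix (Fin N) (Fin N) ℂ))⁻¹ * KB)⁻¹))
      (𝓝[>] 0) (𝓝 0) :=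
  mle_perfect_spoofing_cancellation_general KB KE (by rw [hrankB, Fintype.card_fin])
    (disjoint_iff.mpr hdisj)
end

section
/- Let R ∈ ℂ^{N×N} be Hermitian positive definite and let K ∈ ℂ^{N×L} have full column rank. Then Kᴴ R^{−1} K and Kᴴ K are invertible and trace[ (Kᴴ R^{−1} K)^{−1} ] ≤ trace[ (Kᴴ K)^{−1} Kᴴ R K (Kᴴ K)^{−1} ]. -/
open Matrix ComplexOrder

/-!
The estimators are linear: an observation `y` with disturbance correlation `R` yields the estimate
`B y`, which is unbiased when `B K = 1` and then has error covariance `B R Bᴴ`. The maximum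
likelihood choice `A = (Kᴴ R⁻¹ K)⁻¹ Kᴴ R⁻¹` satisfies `R Aᴴ = K (Kᴴ R⁻¹ K)⁻¹`, so its error is
uncorrelated with the deviation `B - A` of every other unbiased `B`, because `(B - A) K = 0`.
Pythagoras then gives `B R Bᴴ = (Kᴴ R⁻¹ K)⁻¹ + (B - A) R (B - A)ᴴ`, whose last term is positive
semidefinite (the Gauss–Markov theorem). Least squares is one such `B`, and traces preserve the
inequality.
-/

section Estimators

variable {m n 𝕜 : Type*} [Fintype m] [Fintype n] [DecidableEq n] [CommRing 𝕜] [StarRing 𝕜]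

/-- The matrix `(Kᴴ K)⁻¹ Kᴴ` sending an observation to the least squares estimate of the channel.
It is meaningful only when `Kᴴ K` is invertible. -/
noncomputable def lsEstimator (K : Matrix m n 𝕜) : Matrix n m 𝕜 :=
  (Kᴴ * K)⁻¹ * Kᴴ

theorem lsEstimator_mul_self {K : Matrix m n 𝕜} (hK : IsUnit (Kᴴ * K)) :
    lsEstimator K * K = 1 := by
  rw [lsEstimator, Matrix.mul_assoc, nonsing_inv_mul _ ((isUnit_iff_isUnit_det _).mp hK)]

theorem conjTranspose_lsEstimator (K : Matrix m n 𝕜) :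
    (lsEstimator K)ᴴ = K * (Kᴴ * K)⁻¹ := by
  rw [lsEstimator, conjTranspose_mul, conjTranspose_conjTranspose,
    (isHermitian_conjTranspose_mul_self K).inv.eq]

variable [DecidableEq m]

/-- The matrix `(Kᴴ R⁻¹ K)⁻¹ Kᴴ R⁻¹` sending an observation to the maximum likelihood estimate of
the channel under Gaussian disturbance with correlation matrix `R`. It is meaningful only when `R`
and `Kᴴ R⁻¹ K` are invertible. -/
noncomputable def mlEstimator (R : Matrix m m 𝕜) (K : Matrix m n 𝕜) : Matrix n m 𝕜 :=
  (Kᴴ * R⁻¹ * K)⁻¹ * Kᴴ * R⁻¹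

variable {R : Matrix m m 𝕜} {K : Matrix m n 𝕜}

theorem mlEstimator_mul_self (hK : IsUnit (Kᴴ * R⁻¹ * K)) : mlEstimator R K * K = 1 := by
  rw [mlEstimator, Matrix.mul_assoc _ Kᴴ, Matrix.mul_assoc,
    nonsing_inv_mul _ ((isUnit_iff_isUnit_det _).mp hK)]

theorem mlEstimator_mul_correlation (hR : IsUnit R) :
    mlEstimator R K * R = (Kᴴ * R⁻¹ * K)⁻¹ * Kᴴ :=
  nonsing_inv_mul_cancel_right _ _ ((isUnit_iff_isUnit_det _).mp hR)

theorem correlation_mul_conjTranspose_mlEstimator (hR : R.IsHermitian) (hRu : IsUnit R) :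
    R * (mlEstimator R K)ᴴ = K * (Kᴴ * R⁻¹ * K)⁻¹ := by
  have hinfo : (Kᴴ * R⁻¹ * K)⁻¹.IsHermitian := (isHermitian_conjTranspose_mul_mul K hR.inv).inv
  simpa only [conjTranspose_mul, conjTranspose_conjTranspose, hR.eq, hinfo.eq]
    using congrArg conjTranspose (mlEstimator_mul_correlation (K := K) hRu)

theorem sub_mlEstimator_mul_mul_conjTranspose (hR : R.IsHermitian) (hRu : IsUnit R)
    (hK : IsUnit (Kᴴ * R⁻¹ * K)) {B : Matrix n m 𝕜} (hB : B * K = 1) :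
    (B - mlEstimator R K) * R * (B - mlEstimator R K)ᴴ = B * R * Bᴴ - (Kᴴ * R⁻¹ * K)⁻¹ := by
  have uncorrelated : (B - mlEstimator R K) * R * (mlEstimator R K)ᴴ = 0 := by
    rw [Matrix.mul_assoc, correlation_mul_conjTranspose_mlEstimator hR hRu, ← Matrix.mul_assoc,
      Matrix.sub_mul, hB, mlEstimator_mul_self hK, sub_self, Matrix.zero_mul]
  have cross : mlEstimator R K * R * Bᴴ = (Kᴴ * R⁻¹ * K)⁻¹ := by
    rw [mlEstimator_mul_correlation hRu, Matrix.mul_assoc, ← conjTranspose_mul, hB,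
      conjTranspose_one, Matrix.mul_one]
  rw [conjTranspose_sub, Matrix.mul_sub, uncorrelated, sub_zero, Matrix.sub_mul, Matrix.sub_mul,
    cross]

end Estimators

section Rank

variable {m n 𝕜 : Type*} [Fintype n] [CommRing 𝕜] [Nontrivial 𝕜]

theorem mulVec_injective_iff_rank_eq_card {K : Matrix m n 𝕜} :
    Function.Injective K.mulVec ↔ K.rank = Fintype.card n := by
  rw [mulVec_injective_iff, linearIndependent_iff_card_eq_finrank_span,
    rank_eq_finrank_span_cols, eq_comm, Set.finrank]

end Rank

section PosDef

variable {m n 𝕜 : Type*} [Fintype m] [Fintype n] [DecidableEq m] [DecidableEq n]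
  [Field 𝕜] [PartialOrder 𝕜] [StarRing 𝕜] {R : Matrix m m 𝕜} {K : Matrix m n 𝕜}

theorem isUnit_conjTranspose_mul_inv_mul (hR : R.PosDef) (hK : Function.Injective K.mulVec) :
    IsUnit (Kᴴ * R⁻¹ * K) :=
  (hR.inv.conjTranspose_mul_mul_same hK).isUnit

theorem posSemidef_mul_mul_conjTranspose_sub_inv (hR : R.PosDef) {B : Matrix n m 𝕜}
    (hB : B * K = 1) :
    (B * R * Bᴴ - (Kᴴ * R⁻¹ * K)⁻¹).PosSemidef := by
  have hK : Function.Injective K.mulVec :=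
    Function.LeftInverse.injective (g := B.mulVec) fun v ↦ by rw [mulVec_mulVec, hB, one_mulVec]
  rw [← sub_mlEstimator_mul_mul_conjTranspose hR.isHermitian hR.isUnit
    (isUnit_conjTranspose_mul_inv_mul hR hK) hB]
  exact hR.posSemidef.mul_mul_conjTranspose_same _

variable [StarOrderedRing 𝕜]

theorem trace_inv_le_trace_mul_mul_conjTranspose (hR : R.PosDef) {B : Matrix n m 𝕜}
    (hB : B * K = 1) :
    (Kᴴ * R⁻¹ * K)⁻¹.trace ≤ (B * R * Bᴴ).trace := by
  rw [← sub_nonneg, ← trace_sub]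
  exact (posSemidef_mul_mul_conjTranspose_sub_inv hR hB).trace_nonneg

theorem bmse_ml_le_bmse_ls_general (hR : R.PosDef) (hrank : K.rank = Fintype.card n) :
    IsUnit (Kᴴ * R⁻¹ * K) ∧ IsUnit (Kᴴ * K) ∧
    (Kᴴ * R⁻¹ * K)⁻¹.trace ≤ ((Kᴴ * K)⁻¹ * Kᴴ * R * K * (Kᴴ * K)⁻¹).trace := by
  have hinj : Function.Injective K.mulVec := mulVec_injective_iff_rank_eq_card.mpr hrank
  have hgram : IsUnit (Kᴴ * K) := (PosDef.conjTranspose_mul_self K hinj).isUnit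
  have hle := trace_inv_le_trace_mul_mul_conjTranspose hR (lsEstimator_mul_self hgram)
  rw [conjTranspose_lsEstimator, ← Matrix.mul_assoc] at hle
  exact ⟨isUnit_conjTranspose_mul_inv_mul hR hinj, hgram, hle⟩

end PosDef

/-- **BMSE_ML ≤ BMSE_LS.** If `R ∈ ℂ^{N×N}` is Hermitian positive definite and
`K ∈ ℂ^{N×L}` has full column rank, then `Kᴴ R⁻¹ K` and `Kᴴ K` are invertible and
`trace[(Kᴴ R⁻¹ K)⁻¹] ≤ trace[(Kᴴ K)⁻¹ Kᴴ R K (Kᴴ K)⁻¹]` (the traces are real, so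
the inequality is stated between their real parts). -/
theorem bmse_ml_le_bmse_ls
    (N L : ℕ) (R : Matrix (Fin N) (Fin N) ℂ) (hR : R.PosDef)
    (K : Matrix (Fin N) (Fin L) ℂ) (hrank : K.rank = L) :
    IsUnit (Kᴴ * R⁻¹ * K) ∧ IsUnit (Kᴴ * K) ∧
    (Matrix.trace ((Kᴴ * R⁻¹ * K)⁻¹)).re ≤
      (Matrix.trace ((Kᴴ * K)⁻¹ * Kᴴ * R * K * (Kᴴ * K)⁻¹)).re := by
  obtain ⟨hinfo, hgram, hle⟩ :=
    bmse_ml_le_bmse_ls_general hR (hrank.trans (Fintype.card_fin L).symm)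
  exact ⟨hinfo, hgram, (Complex.le_def.mp hle).1⟩
end
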